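/- arXiv:2504.13487 — 2 statements merged into one kernel-verified Lean document; each statement's English description precedes it below -/
import Mathlib

section
/- Let X be a complex Banach space, let ε > 0, 0 ≤ s ≤ t, M ≥ 0, and let g : ℝ → X be continuous with ‖g(r)‖ ≤ M for all r ≥ 0. Then, with T := (t − s)/ε², one has ‖ε² ∫₀^T e^{-τ} (∫₀^τ (τ − r) g(r) dr) dτ‖ ≤ 2 M min(ε², ε^{−2} (t − s)²), where the integrals are Bochner integrals. -/
theorem remainder_bound_first {X : Type*} [NormedAddCommGroup X] [NormedSpace ℂ X]
    [CompleteSpace X] (ε : ℝ) (hε : 0 < ε) (s t : ℝ) (hs : 0 ≤ s) (hst : s ≤ t)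
    (M : ℝ) (hM : 0 ≤ M) (g : ℝ → X) (hg : Continuous g)
    (hgbound : ∀ r : ℝ, 0 ≤ r → ‖g r‖ ≤ M) :
    ‖(ε ^ 2) • ∫ τ in (0:ℝ)..((t - s) / ε ^ 2),
        Real.exp (-τ) • (∫ r in (0:ℝ)..τ, (τ - r) • g r)‖
      ≤ 2 * M * min (ε ^ 2) ((ε ^ 2)⁻¹ * (t - s) ^ 2) := by
  have hE : 0 < ε ^ 2 := by positivity
  obtain ⟨T, hT⟩ : ∃ T, T = (t - s) / ε ^ 2 := ⟨_, rfl⟩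
  have hT0 : 0 ≤ T := by
    rw [hT]; exact div_nonneg (sub_nonneg.2 hst) hE.le
  have hts : (ε ^ 2)⁻¹ * (t - s) ^ 2 = ε ^ 2 * T ^ 2 := by
    rw [hT]; field_simp
  rw [hts, ← hT]
  have hin : ∀ τ : ℝ, 0 ≤ τ → ‖∫ r in (0:ℝ)..τ, (τ - r) • g r‖ ≤ M * τ ^ 2 := by
    intro τ hτ
    have h := intervalIntegral.norm_integral_le_of_norm_le_const (a := 0) (b := τ)
      (f := fun r => (τ - r) • g r) (C := τ * M) (by
        intro r hr
        rw [Set.uIoc_of_le hτ] at hr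
        rw [norm_smul, Real.norm_eq_abs, abs_of_nonneg (by linarith [hr.2])]
        exact mul_le_mul (by linarith [hr.1]) (hgbound r hr.1.le) (norm_nonneg _) hτ)
    rw [sub_zero, abs_of_nonneg hτ] at h
    linarith
  have hpt : ∀ τ : ℝ, 0 ≤ τ →
      ‖Real.exp (-τ) • (∫ r in (0:ℝ)..τ, (τ - r) • g r)‖ ≤ M * (τ ^ 2 * Real.exp (-τ)) := by
    intro τ hτ
    rw [norm_smul, Real.norm_eq_abs, abs_of_pos (Real.exp_pos _)]
    have := mul_le_mul_of_nonneg_left (hin τ hτ) (Real.exp_pos (-τ)).le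
    linarith
  have h1 : ‖∫ τ in (0:ℝ)..T, Real.exp (-τ) • (∫ r in (0:ℝ)..τ, (τ - r) • g r)‖ ≤ 2 * M := by
    have hi : ∀ a b : ℝ, IntervalIntegrable (fun τ : ℝ => M * (τ ^ 2 * Real.exp (-τ)))
        MeasureTheory.volume a b := fun a b =>
      (by fun_prop : Continuous fun τ : ℝ => M * (τ ^ 2 * Real.exp (-τ))).intervalIntegrable a b
    refine (intervalIntegral.norm_integral_le_of_norm_le hT0
      (Filter.Eventually.of_forall fun τ hτ => hpt τ hτ.1.le) (hi 0 T)).trans ?_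
    have hd : ∀ x ∈ Set.uIcc 0 T, HasDerivAt
        (fun x : ℝ => -(M * ((x ^ 2 + 2 * x + 2) * Real.exp (-x))))
        (M * (x ^ 2 * Real.exp (-x))) x := by
      intro x _
      have he : HasDerivAt (fun x : ℝ => Real.exp (-x)) (Real.exp (-x) * (-1)) x :=
        (hasDerivAt_neg x).exp
      have hp : HasDerivAt (fun x : ℝ => x ^ 2 + 2 * x + 2) (2 * x + 2) x := by
        have := ((hasDerivAt_pow 2 x).add ((hasDerivAt_id x).const_mul 2)).add_const 2
        exact this.congr_deriv (by norm_num)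
      exact (((hp.mul he).const_mul M).neg).congr_deriv (by ring)
    rw [intervalIntegral.integral_eq_sub_of_hasDerivAt hd (hi 0 T)]
    have : 0 ≤ M * ((T ^ 2 + 2 * T + 2) * Real.exp (-T)) := by positivity
    norm_num
    linarith
  have h2 : ‖∫ τ in (0:ℝ)..T, Real.exp (-τ) • (∫ r in (0:ℝ)..τ, (τ - r) • g r)‖
      ≤ 2 * M * T ^ 2 := by
    have h := intervalIntegral.norm_integral_le_of_norm_le_const (a := 0) (b := T)
      (f := fun τ => Real.exp (-τ) • (∫ r in (0:ℝ)..τ, (τ - r) • g r)) (C := M * T) (by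
        intro τ hτ
        rw [Set.uIoc_of_le hT0] at hτ
        refine (hpt τ hτ.1.le).trans (mul_le_mul_of_nonneg_left ?_ hM)
        have h3 : τ * Real.exp (-τ) ≤ 1 := by
          rw [Real.exp_neg, ← div_eq_mul_inv, div_le_one (Real.exp_pos _)]
          linarith [Real.add_one_le_exp τ]
        nlinarith [hτ.1, hτ.2])
    rw [sub_zero, abs_of_nonneg hT0] at h
    nlinarith [mul_nonneg hM (sq_nonneg T)]
  rw [norm_smul, Real.norm_eq_abs, abs_of_pos hE]
  rcases min_choice (ε ^ 2) (ε ^ 2 * T ^ 2) with h | h <;> rw [h]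
  · nlinarith [mul_le_mul_of_nonneg_left h1 hE.le]
  · nlinarith [mul_le_mul_of_nonneg_left h2 hE.le]
end

section
/- Let X be a complex Banach space, let ε > 0, 0 ≤ s ≤ t, M ≥ 0, and let h : ℝ → X be continuous with ‖h(r)‖ ≤ M for all r. Then, with T := (t − s)/ε², one has ‖∫₀^T e^{-τ} (∫_{t − ε²τ}^{t} h(r) dr) dτ‖ ≤ M min(ε², ε^{−2} (t − s)²), where the integrals are Bochner integrals. -/
theorem remainder_bound_second {X : Type*} [NormedAddCommGroup X] [NormedSpace ℂ X]
    [CompleteSpace X] (ε : ℝ) (hε : 0 < ε) (s t : ℝ) (hs : 0 ≤ s) (hst : s ≤ t)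
    (M : ℝ) (hM : 0 ≤ M) (h : ℝ → X) (hh : Continuous h)
    (hhbound : ∀ r : ℝ, ‖h r‖ ≤ M) :
    ‖∫ τ in (0:ℝ)..((t - s) / ε ^ 2),
        Real.exp (-τ) • (∫ r in (t - ε ^ 2 * τ)..t, h r)‖
      ≤ M * min (ε ^ 2) ((ε ^ 2)⁻¹ * (t - s) ^ 2) := by
  have he : 0 < ε ^ 2 := by positivity
  have hT : 0 ≤ (t - s) / ε ^ 2 := div_nonneg (by linarith) he.le
  have hTe : (ε ^ 2)⁻¹ * (t - s) ^ 2 = ε ^ 2 * ((t - s) / ε ^ 2) * ((t - s) / ε ^ 2) := by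
    field_simp
  rw [hTe]
  generalize (t - s) / ε ^ 2 = T at *
  have key : ∀ τ : ℝ, 0 ≤ τ → ‖Real.exp (-τ) • (∫ r in (t - ε ^ 2 * τ)..t, h r)‖
      ≤ M * ε ^ 2 * (τ * Real.exp (-τ)) := by
    intro τ hτ
    have h1 := intervalIntegral.norm_integral_le_of_norm_le_const
      (a := t - ε ^ 2 * τ) (b := t) (f := h) (C := M) (fun r _ => hhbound r)
    have h2 : t - (t - ε ^ 2 * τ) = ε ^ 2 * τ := by ring
    rw [h2, abs_of_nonneg (by positivity)] at h1
    rw [norm_smul, Real.norm_of_nonneg (Real.exp_pos _).le]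
    calc _ ≤ Real.exp (-τ) * (M * (ε ^ 2 * τ)) := by gcongr
      _ = _ := by ring
  rw [mul_min_of_nonneg _ _ hM]
  apply le_min
  · have hc : Continuous fun τ : ℝ => M * ε ^ 2 * (τ * Real.exp (-τ)) := by fun_prop
    have h1 := intervalIntegral.norm_integral_le_of_norm_le (μ := MeasureTheory.volume) hT
      (Filter.Eventually.of_forall fun τ hτ => key τ hτ.1.le) (hc.intervalIntegrable 0 T)
    refine h1.trans ?_
    have hd : ∀ x ∈ Set.uIcc 0 T, HasDerivAt
        (fun τ : ℝ => M * ε ^ 2 * (-(τ + 1) * Real.exp (-τ)))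
        (M * ε ^ 2 * (x * Real.exp (-x))) x := by
      intro x _
      have := ((((hasDerivAt_id x).add_const 1).neg).mul
        ((hasDerivAt_id x).neg.exp)).const_mul (M * ε ^ 2)
      refine this.congr_deriv ?_
      simp only [id, Pi.neg_apply]
      ring
    rw [intervalIntegral.integral_eq_sub_of_hasDerivAt hd (hc.intervalIntegrable 0 T)]
    have : 0 ≤ M * ε ^ 2 * ((T + 1) * Real.exp (-T)) := by positivity
    simp
    linarith
  · have h1 := intervalIntegral.norm_integral_le_of_norm_le_const
      (a := 0) (b := T) (f := fun τ => Real.exp (-τ) • (∫ r in (t - ε ^ 2 * τ)..t, h r))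
      (C := M * ε ^ 2 * T) (by
        intro τ hτ
        rw [Set.uIoc_of_le hT] at hτ
        refine (key τ hτ.1.le).trans ?_
        have : Real.exp (-τ) ≤ 1 := Real.exp_le_one_iff.2 (by linarith [hτ.1])
        have h3 : τ * Real.exp (-τ) ≤ T := by nlinarith [hτ.1, hτ.2]
        gcongr)
    rw [sub_zero, abs_of_nonneg hT] at h1
    linarith
end
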